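/- In Case A, assume P(γ = ∞) = 0, E|L′| < ∞, and ∫_{[0,t_G)} |H(s)| dG(s) < ∞. Then M is a uniformly integrable martingale with E(sup_t |M_t|) = ∞ if and only if lim_{t↑t_G} F(t)Ḡ(t) = 0 and ∫_{[0,t_G)} Ḡ(s)·|dF/dG(s)| dG(s) = ∞. -/

import Mathlib

open MeasureTheory Filter Set Topology
open scoped ENNReal NNReal Classical

noncomputable section

namespace SingleJump

variable {Ω : Type*}

/-- The event `{γ > t}`. -/
def jumpSet (γ : Ω → ℝ≥0∞) (t : ℝ≥0) : Set Ω := {ω | (t : ℝ≥0∞) < γ ω}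

/-- The collection `𝒻_t` of the single jump filtration generated by `γ` and the σ-field `m`:
`A ∈ 𝒻_t` iff `A` is `m`-measurable and `A ∩ {γ > t}` is either `∅` or `{γ > t}`. -/
def jumpColl (m : MeasurableSpace Ω) (γ : Ω → ℝ≥0∞) (t : ℝ≥0) : Set (Set Ω) :=
  {A | MeasurableSet[m] A ∧ (A ∩ jumpSet γ t = ∅ ∨ A ∩ jumpSet γ t = jumpSet γ t)}

/-- `𝒻_t` as a σ-field (the collection `jumpColl` generates itself, see Proposition 1(i)). -/
def jumpσ (m : MeasurableSpace Ω) (γ : Ω → ℝ≥0∞) (t : ℝ≥0) : MeasurableSpace Ω :=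
  MeasurableSpace.generateFrom (jumpColl m γ t)

/-- `𝒻_∞ = σ(⋃_{t ∈ ℝ₊} 𝒻_t)`. -/
def jumpσInf (m : MeasurableSpace Ω) (γ : Ω → ℝ≥0∞) : MeasurableSpace Ω :=
  ⨆ t : ℝ≥0, jumpσ m γ t

/-- A real function on `ℝ≥0` is càdlàg: right-continuous everywhere, finite left limits. -/
def Cadlag (f : ℝ≥0 → ℝ) : Prop :=
  (∀ t, ContinuousWithinAt f (Ici t) t) ∧
    ∀ t : ℝ≥0, 0 < t → ∃ c : ℝ, Tendsto f (𝓝[<] t) (𝓝 c)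

/-- The filter of times `t ∈ ℝ≥0` with `t ↑ a` strictly from the left (this is `atTop`
when `a = ∞`). -/
def leftF (a : ℝ≥0∞) : Filter ℝ≥0 := Filter.comap (fun t : ℝ≥0 => (t : ℝ≥0∞)) (𝓝[<] a)

/-- Total variation of `f` over `[0,∞)`, including `|f 0|` (the paper's convention `Var`). -/
def totalVar (f : ℝ≥0 → ℝ) : ℝ≥0∞ := (‖f 0‖₊ : ℝ≥0∞) + eVariationOn f Set.univ

/-- The process `M` stopped at the (possibly infinite) random time `T`. -/
def stopped (M : ℝ≥0 → Ω → ℝ) (T : Ω → ℝ≥0∞) : ℝ≥0 → Ω → ℝ :=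
  fun t ω => M (((t : ℝ≥0∞) ⊓ T ω).toNNReal) ω

section WithMeasurableSpace

variable [m : MeasurableSpace Ω]

/-- `Ḡ(t) = 1 - G(t) = P(γ > t)`. -/
def Gbar (μ : Measure Ω) (γ : Ω → ℝ≥0∞) (t : ℝ≥0) : ℝ :=
  (μ {ω | (t : ℝ≥0∞) < γ ω}).toReal

/-- `Ḡ(t-) = P(γ ≥ t)`, the left-hand limit of `Ḡ` at `t`. -/
def GbarLeft (μ : Measure Ω) (γ : Ω → ℝ≥0∞) (t : ℝ≥0) : ℝ :=
  (μ {ω | (t : ℝ≥0∞) ≤ γ ω}).toReal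

/-- `t_G = sup {t ∈ ℝ₊ : G(t) < 1}`, the right endpoint of the law of `γ`. -/
def tG (μ : Measure Ω) (γ : Ω → ℝ≥0∞) : ℝ≥0∞ :=
  sSup ((fun t : ℝ≥0 => (t : ℝ≥0∞)) '' {t : ℝ≥0 | μ {ω | γ ω ≤ (t : ℝ≥0∞)} < 1})

/-- `𝒯 = {t ∈ ℝ₊ : P(γ ≥ t) > 0}`. -/
def TT (μ : Measure Ω) (γ : Ω → ℝ≥0∞) : Set ℝ≥0 :=
  {t | 0 < μ {ω | (t : ℝ≥0∞) ≤ γ ω}}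

/-- Case A: `P(γ = t_G < ∞) = 0`. -/
def CaseA (μ : Measure Ω) (γ : Ω → ℝ≥0∞) : Prop :=
  μ {ω | γ ω = tG μ γ ∧ tG μ γ < ⊤} = 0

/-- Case B: `P(γ = t_G < ∞) > 0`. -/
def CaseB (μ : Measure Ω) (γ : Ω → ℝ≥0∞) : Prop :=
  0 < μ {ω | γ ω = tG μ γ ∧ tG μ γ < ⊤}

/-- `z ∈ L¹_loc(dG)` : `z` is Borel and `∫_{[0,t]} |z(s)| dG(s) < ∞` for every `t ∈ 𝒯`,
where `dG` is the law of `γ` (a measure on `[0,∞]`). -/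
def MemL1loc (μ : Measure Ω) (γ : Ω → ℝ≥0∞) (z : ℝ≥0 → ℝ) : Prop :=
  Measurable z ∧ ∀ t ∈ TT μ γ,
    IntegrableOn (fun x : ℝ≥0∞ => z x.toNNReal) (Icc 0 (t : ℝ≥0∞)) (μ.map γ)

/-- `F loc≪ G` with density `z = dF/dG` : `F(t) = F(0) + ∫_(0,t] z(s) dG(s)` for `t < t_G`. -/
def LocAC (μ : Measure Ω) (γ : Ω → ℝ≥0∞) (F z : ℝ≥0 → ℝ) : Prop :=
  MemL1loc μ γ z ∧ ∀ t : ℝ≥0, (t : ℝ≥0∞) < tG μ γ →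
    F t = F 0 + ∫ x in Ioc (0 : ℝ≥0∞) (t : ℝ≥0∞), z x.toNNReal ∂(μ.map γ)

/-- Condition M for the pair `(F, H)`. -/
def CondM (μ : Measure Ω) (γ : Ω → ℝ≥0∞) (F H : ℝ≥0 → ℝ) : Prop :=
  (∃ z, LocAC μ γ F z) ∧ MemL1loc μ γ H ∧
  (∀ t : ℝ≥0, (t : ℝ≥0∞) < tG μ γ →
    F t * Gbar μ γ t + ∫ x in Ioc (0 : ℝ≥0∞) (t : ℝ≥0∞), H x.toNNReal ∂(μ.map γ)
      = F 0 * Gbar μ γ 0) ∧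
  (CaseB μ γ → Tendsto F (leftF (tG μ γ)) (𝓝 (H (tG μ γ).toNNReal)))

/-- A stopping time of the single jump filtration: `{T ≤ t} ∈ 𝒻_t` for all `t ∈ ℝ₊`. -/
def IsSJStoppingTime (γ : Ω → ℝ≥0∞) (T : Ω → ℝ≥0∞) : Prop :=
  ∀ t : ℝ≥0, {ω | T ω ≤ (t : ℝ≥0∞)} ∈ jumpColl m γ t

/-- The martingale property on a set `S` of times, w.r.t. the single jump filtration. -/
def MartingaleOn (μ : Measure Ω) (γ : Ω → ℝ≥0∞) (M : ℝ≥0 → Ω → ℝ) (S : Set ℝ≥0) : Prop :=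
  (∀ t ∈ S, Measurable[jumpσ m γ t] (M t)) ∧ (∀ t ∈ S, Integrable (M t) μ) ∧
    ∀ s ∈ S, ∀ t ∈ S, s ≤ t → μ[M t|jumpσ m γ s] =ᵐ[μ] M s

/-- A uniformly integrable martingale w.r.t. the single jump filtration. -/
def UIMartingale (μ : Measure Ω) (γ : Ω → ℝ≥0∞) (M : ℝ≥0 → Ω → ℝ) : Prop :=
  MartingaleOn μ γ M Set.univ ∧ UniformIntegrable M 1 μ

/-- A local martingale w.r.t. the single jump filtration: adapted, a.s. càdlàg paths, and
there are stopping times `T n ↑ ∞` a.s. with each stopped process a UI martingale. -/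
def LocalMartingale (μ : Measure Ω) (γ : Ω → ℝ≥0∞) (M : ℝ≥0 → Ω → ℝ) : Prop :=
  (∀ t : ℝ≥0, Measurable[jumpσ m γ t] (M t)) ∧
  (∀ᵐ ω ∂μ, Cadlag fun t => M t ω) ∧
  ∃ T : ℕ → Ω → ℝ≥0∞,
    (∀ n, IsSJStoppingTime γ (T n)) ∧
    (∀ᵐ ω ∂μ, Monotone (fun n => T n ω) ∧ Tendsto (fun n => T n ω) atTop (𝓝 (⊤ : ℝ≥0∞))) ∧
    ∀ n, UIMartingale μ γ (stopped M (T n))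

/-- `E[L' | γ] = 0` for a (possibly only locally integrable) random variable `L'`. -/
def CondZeroGivenGamma (μ : Measure Ω) (γ : Ω → ℝ≥0∞) (L' : Ω → ℝ) : Prop :=
  ∀ B : Set ℝ≥0∞, MeasurableSet B → IntegrableOn L' (γ ⁻¹' B) μ →
    ∫ ω in γ ⁻¹' B, L' ω ∂μ = 0

/-!
Write `ν` for the law of `γ` and `L = H(γ) + L'`. Since `γ < t_G` almost surely, `P(γ > t) → 0` as
`t ↑ t_G`, and `F(t)Ḡ(t)` is the integral of `M_t` over `{γ > t}`. Uniform integrability thus forces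
`F Ḡ → 0`. Conversely, letting the upper limit in Condition M tend to `t_G`, the limit `F Ḡ → 0`
turns it into `F(t)Ḡ(t) = ∫_{(t,∞]} H dν = E[L; γ > t]`; as `{γ > t}` is an atom of `𝒻_t`, this says
`M_t = E[L | 𝒻_t]`.

For the supremum, `M` runs through `F` on `[0, γ)`. It is therefore at most
`|F(0)| + |L| + ∫_{(0,γ)} |dF/dG| dν`, and by Fubini the last term has mean `∫ Ḡ |dF/dG| dν`. In the
other direction it is at least `|F(γ-)|`, while the product rule applied to Condition M gives
`Ḡ dF/dG = F₋ - H` almost everywhere with respect to `ν`, where `H` is integrable.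
-/

section LinearOrder

variable {α : Type*} [LinearOrder α] [TopologicalSpace α] [OrderTopology α]
  [MeasurableSpace α] [BorelSpace α]

lemma restrict_Ioc_restrict_Iio {ν : Measure α} {a t u : α} (hut : u ≤ t) :
    (ν.restrict (Ioc a t)).restrict (Iio u) = ν.restrict (Ioo a u) := by
  rw [Measure.restrict_restrict measurableSet_Iio]
  congr 1
  ext x
  simp only [mem_inter_iff, mem_Iio, mem_Ioc, mem_Ioo]
  exact ⟨fun h => ⟨h.2.1, h.1⟩, fun h => ⟨h.2, h.1, h.2.le.trans hut⟩⟩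

lemma measureReal_Ioi_eq_add {ν : Measure α} [IsFiniteMeasure ν] {x t : α} (hxt : x ≤ t) :
    ν.real (Ioi x) = ν.real (Ioc x t) + ν.real (Ioi t) := by
  rw [← Ioc_union_Ioi_eq_Ioi hxt, measureReal_union (Ioc_disjoint_Ioi le_rfl) measurableSet_Ioi]

lemma integrableOn_measureReal_Ioi_mul {ν : Measure α} [IsFiniteMeasure ν] {f : α → ℝ} {s : Set α}
    (hf : IntegrableOn f s ν) : IntegrableOn (fun x => ν.real (Ioi x) * f x) s ν := by
  have tail_meas : Measurable fun x => ν.real (Ioi x) :=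
    Antitone.measurable fun _ _ hxy => measureReal_mono (Ioi_subset_Ioi hxy)
  refine hf.bdd_mul (c := ν.real univ) tail_meas.aestronglyMeasurable (.of_forall fun x => ?_)
  rw [Real.norm_of_nonneg measureReal_nonneg]
  exact measureReal_mono (subset_univ _)

variable [SecondCountableTopology α]
  {E : Type*} [NormedAddCommGroup E]

lemma ae_eq_restrict_Ioc_of_forall_setIntegral_eq [NormedSpace ℝ E] [CompleteSpace E]
    {ν : Measure α} {f g : α → E} {a b : α}
    (hf : IntegrableOn f (Ioc a b) ν) (hg : IntegrableOn g (Ioc a b) ν)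
    (hfg : ∀ t ∈ Icc a b, ∫ x in Ioc a t, f x ∂ν = ∫ x in Ioc a t, g x ∂ν) :
    f =ᵐ[ν.restrict (Ioc a b)] g := by
  rcases lt_or_ge b a with hba | hab
  · simp [Ioc_eq_empty hba.not_gt, EventuallyEq]
  refine hf.ae_eq_of_withDensityᵥ_eq hg (VectorMeasure.ext_of_generateFrom (range Iic) ?_
    ((BorelSpace.measurable_eq (α := α)).trans (borel_eq_generateFrom_Iic α)) isPiSystem_Iic ?_)
  · rintro _ ⟨t, rfl⟩
    rw [withDensityᵥ_apply hf measurableSet_Iic, withDensityᵥ_apply hg measurableSet_Iic,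
      Measure.restrict_restrict measurableSet_Iic, inter_comm, Ioc_inter_Iic]
    rcases le_total a (b ⊓ t) with hat | hta
    · exact hfg _ ⟨hat, inf_le_left⟩
    · simp [Ioc_eq_empty hta.not_gt]
  · simpa only [withDensityᵥ_apply hf .univ, withDensityᵥ_apply hg .univ, setIntegral_univ]
      using hfg b ⟨hab, le_rfl⟩

lemma ae_eq_restrict_Ioo_of_forall_setIntegral_eq [DenselyOrdered α] [NormedSpace ℝ E]
    [CompleteSpace E] {ν : Measure α} {f g : α → E} {a b : α}
    (hf : ∀ t ∈ Ico a b, IntegrableOn f (Ioc a t) ν)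
    (hg : ∀ t ∈ Ico a b, IntegrableOn g (Ioc a t) ν)
    (hfg : ∀ t ∈ Ico a b, ∫ x in Ioc a t, f x ∂ν = ∫ x in Ioc a t, g x ∂ν) :
    f =ᵐ[ν.restrict (Ioo a b)] g := by
  rcases le_or_gt b a with hba | hab
  · simp [Ioo_eq_empty hba.not_gt, EventuallyEq]
  obtain ⟨u, -, hu_mem, hu_tendsto⟩ := exists_seq_strictMono_tendsto' hab
  have ae_eq_Ioc : ∀ᵐ x ∂ν, ∀ n, x ∈ Ioc a (u n) → f x = g x := by
    refine ae_all_iff.2 fun n => (ae_restrict_iff' measurableSet_Ioc).1 ?_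
    have hn : u n ∈ Ico a b := Ioo_subset_Ico_self (hu_mem n)
    exact ae_eq_restrict_Ioc_of_forall_setIntegral_eq (hf _ hn) (hg _ hn)
      fun t ht => hfg t ⟨ht.1, ht.2.trans_lt hn.2⟩
  refine (ae_restrict_iff' measurableSet_Ioo).2 ?_
  filter_upwards [ae_eq_Ioc] with x hx hxab
  obtain ⟨n, hn⟩ := (hu_tendsto.eventually (lt_mem_nhds hxab.2)).exists
  exact hx n ⟨hxab.1, hn.le⟩

lemma lintegral_setLIntegral_Iio {ν ρ : Measure α} [SFinite ν] [SFinite ρ] {f : α → ℝ≥0∞}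
    (hf : Measurable f) :
    ∫⁻ u, ∫⁻ x in Iio u, f x ∂ρ ∂ν = ∫⁻ x, ν (Ioi x) * f x ∂ρ := by
  have kernel_meas : Measurable fun p : α × α => {p : α × α | p.2 < p.1}.indicator
      (fun p => f p.2) p :=
    (hf.comp measurable_snd).indicator (measurableSet_lt measurable_snd measurable_fst)
  calc ∫⁻ u, ∫⁻ x in Iio u, f x ∂ρ ∂ν
      = ∫⁻ u, ∫⁻ x, {p : α × α | p.2 < p.1}.indicator (fun p => f p.2) (u, x) ∂ρ ∂ν := by
        simp_rw [← lintegral_indicator measurableSet_Iio]; rfl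
    _ = ∫⁻ x, ∫⁻ u, (Ioi x).indicator (fun _ => f x) u ∂ν ∂ρ :=
        lintegral_lintegral_swap kernel_meas.aemeasurable
    _ = ∫⁻ x, ν (Ioi x) * f x ∂ρ := by
        simp_rw [lintegral_indicator_const measurableSet_Ioi, mul_comm]

lemma integrable_indicator_lt_prod {ν ρ : Measure α} [IsFiniteMeasure ν] [SFinite ρ] {f : α → E}
    (hf : Integrable f ρ) :
    Integrable ({p : α × α | p.2 < p.1}.indicator fun p => f p.2) (ν.prod ρ) :=
  (hf.comp_snd ν).indicator (measurableSet_lt measurable_snd measurable_fst)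

lemma integrable_setIntegral_Iio [NormedSpace ℝ E] {ν ρ : Measure α} [IsFiniteMeasure ν] [SFinite ρ]
    {f : α → E} (hf : Integrable f ρ) : Integrable (fun u => ∫ x in Iio u, f x ∂ρ) ν := by
  simp_rw [← integral_indicator measurableSet_Iio]
  exact (integrable_indicator_lt_prod hf).integral_prod_left

lemma integral_setIntegral_Iio {ν ρ : Measure α} [IsFiniteMeasure ν] [SFinite ρ] {f : α → ℝ}
    (hf : Integrable f ρ) :
    ∫ u, ∫ x in Iio u, f x ∂ρ ∂ν = ∫ x, ν.real (Ioi x) * f x ∂ρ :=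
  calc ∫ u, ∫ x in Iio u, f x ∂ρ ∂ν
      = ∫ u, ∫ x, {p : α × α | p.2 < p.1}.indicator (fun p => f p.2) (u, x) ∂ρ ∂ν := by
        simp_rw [← integral_indicator measurableSet_Iio]; rfl
    _ = ∫ x, ∫ u, (Ioi x).indicator (fun _ => f x) u ∂ν ∂ρ :=
        integral_integral_swap (integrable_indicator_lt_prod hf)
    _ = ∫ x, ν.real (Ioi x) * f x ∂ρ := by
        simp_rw [integral_indicator_const _ measurableSet_Ioi, smul_eq_mul]

lemma integrableOn_setIntegral_Ioo [NormedSpace ℝ E] {ν : Measure α} [IsFiniteMeasure ν]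
    {f : α → E} {a t : α} (hf : IntegrableOn f (Ioc a t) ν) :
    IntegrableOn (fun u => ∫ x in Ioo a u, f x ∂ν) (Ioc a t) ν := by
  refine (integrableOn_congr_fun (fun u hu => ?_) measurableSet_Ioc).1
    (integrable_setIntegral_Iio hf)
  rw [restrict_Ioc_restrict_Iio hu.2]

lemma setIntegral_Ioc_measureReal_Ioi_mul {ν : Measure α} [IsFiniteMeasure ν] {f : α → ℝ} {a t : α}
    (hf : IntegrableOn f (Ioc a t) ν) :
    ∫ x in Ioc a t, ν.real (Ioi x) * f x ∂ν =
      (∫ u in Ioc a t, ∫ x in Ioo a u, f x ∂ν ∂ν) + ν.real (Ioi t) * ∫ x in Ioc a t, f x ∂ν := by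
  have tail_split : ∀ x ∈ Ioc a t, ν.real (Ioi x) * f x =
      (ν.restrict (Ioc a t)).real (Ioi x) * f x + ν.real (Ioi t) * f x := fun x hx => by
    rw [measureReal_restrict_apply measurableSet_Ioi, inter_comm, Ioc_inter_Ioi,
      sup_eq_right.2 hx.1.le, measureReal_Ioi_eq_add hx.2, add_mul]
  have fubini : ∫ x in Ioc a t, (ν.restrict (Ioc a t)).real (Ioi x) * f x ∂ν =
      ∫ u in Ioc a t, ∫ x in Ioo a u, f x ∂ν ∂ν := by
    rw [← integral_setIntegral_Iio hf]
    exact setIntegral_congr_fun measurableSet_Ioc fun u hu => by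
      simp only [restrict_Ioc_restrict_Iio hu.2]
  have hint := integrableOn_measureReal_Ioi_mul (ν := ν.restrict (Ioc a t)) (s := univ)
    hf.integrableOn
  rw [setIntegral_congr_fun measurableSet_Ioc tail_split,
    integral_add (integrableOn_univ.1 hint) (hf.const_mul _), fubini, integral_const_mul]

/-- With `F t = c + ∫_{(a,t]} φ dν` and `Ḡ t = ν (t,∞)`, the hypothesis `heq` says
`d(F Ḡ) = -h dν`, whereas the product rule gives `d(F Ḡ) = Ḡ φ dν - F₋ dν`. -/
lemma measureReal_Ioi_mul_ae_eq_of_forall_add_setIntegral_eq [DenselyOrdered α] {ν : Measure α}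
    [IsFiniteMeasure ν] {φ h : α → ℝ} {a b : α} {c : ℝ}
    (hφ : ∀ t ∈ Ico a b, IntegrableOn φ (Ioc a t) ν)
    (hh : ∀ t ∈ Ico a b, IntegrableOn h (Ioc a t) ν)
    (heq : ∀ t ∈ Ico a b, (c + ∫ x in Ioc a t, φ x ∂ν) * ν.real (Ioi t) + ∫ x in Ioc a t, h x ∂ν
      = c * ν.real (Ioi a)) :
    ∀ᵐ x ∂ν.restrict (Ioo a b), ν.real (Ioi x) * φ x = c + ∫ s in Ioo a x, φ s ∂ν - h x := by
  have left_integrable : ∀ t ∈ Ico a b,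
      IntegrableOn (fun x => c + ∫ s in Ioo a x, φ s ∂ν) (Ioc a t) ν := fun t ht =>
    (integrable_const c).add (integrableOn_setIntegral_Ioo (hφ t ht))
  refine ae_eq_restrict_Ioo_of_forall_setIntegral_eq
    (fun t ht => integrableOn_measureReal_Ioi_mul (hφ t ht))
    (fun t ht => (left_integrable t ht).sub (hh t ht)) fun t ht => ?_
  rw [setIntegral_Ioc_measureReal_Ioi_mul (hφ t ht),
    integral_sub (left_integrable t ht) (hh t ht),
    integral_add (integrable_const c) (integrableOn_setIntegral_Ioo (hφ t ht)),
    setIntegral_const, smul_eq_mul]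
  linear_combination heq t ht + c * measureReal_Ioi_eq_add (ν := ν) ht.1

end LinearOrder

section LeftLimits

lemma leftF_neBot {b : ℝ≥0∞} (hb : 0 < b) : (leftF b).NeBot := by
  have : (𝓝[<] b).NeBot := nhdsLT_neBot_of_exists_lt ⟨0, hb⟩
  refine this.comap_of_range_mem (mem_of_superset self_mem_nhdsWithin fun x hx => ?_)
  exact ⟨x.toNNReal, ENNReal.coe_toNNReal (ne_top_of_lt hx)⟩

instance isCountablyGenerated_leftF (b : ℝ≥0∞) : (leftF b).IsCountablyGenerated := by
  unfold leftF
  infer_instance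

lemma tendsto_coe_leftF (b : ℝ≥0∞) : Tendsto ((↑) : ℝ≥0 → ℝ≥0∞) (leftF b) (𝓝[<] b) :=
  tendsto_comap

lemma eventually_coe_lt_leftF (b : ℝ≥0∞) : ∀ᶠ t : ℝ≥0 in leftF b, (t : ℝ≥0∞) < b :=
  tendsto_coe_leftF b self_mem_nhdsWithin

lemma eventually_lt_coe_leftF {x b : ℝ≥0∞} (hxb : x < b) :
    ∀ᶠ t : ℝ≥0 in leftF b, x < (t : ℝ≥0∞) :=
  tendsto_coe_leftF b (mem_nhdsWithin_of_mem_nhds (lt_mem_nhds hxb))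

lemma tendsto_setIntegral_Ioc_leftF {E : Type*} [NormedAddCommGroup E] [NormedSpace ℝ E]
    {ν : Measure ℝ≥0∞} {f : ℝ≥0∞ → E} {a b : ℝ≥0∞} (hf : IntegrableOn f (Ioo a b) ν) :
    Tendsto (fun t : ℝ≥0 => ∫ x in Ioc a (t : ℝ≥0∞), f x ∂ν) (leftF b)
      (𝓝 (∫ x in Ioo a b, f x ∂ν)) := by
  have cover : AECover (ν.restrict (Ioo a b)) (leftF b) fun t : ℝ≥0 => Ioc a (t : ℝ≥0∞) :=
    aecover_Ioo_of_Ioc tendsto_const_nhds ((tendsto_coe_leftF b).mono_right nhdsWithin_le_nhds)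
  refine (cover.integral_tendsto_of_countably_generated hf).congr' ?_
  filter_upwards [eventually_coe_lt_leftF b] with t ht
  rw [Measure.restrict_restrict measurableSet_Ioc,
    inter_eq_left.2 (Ioc_subset_Ioo_right ht)]

end LeftLimits

lemma tendsto_setIntegral_of_unifIntegrable {ι E : Type*} [NormedAddCommGroup E] [NormedSpace ℝ E]
    {μ : Measure Ω} {X : ι → Ω → E} {A : ι → Set Ω} {l : Filter ι} (hX : UnifIntegrable X 1 μ)
    (hA : ∀ i, MeasurableSet (A i)) (hμA : Tendsto (fun i => μ (A i)) l (𝓝 0)) :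
    Tendsto (fun i => ∫ ω in A i, X i ω ∂μ) l (𝓝 0) := by
  rw [tendsto_zero_iff_enorm_tendsto_zero, ENNReal.tendsto_nhds_zero]
  intro ε hε
  obtain ⟨r, hr, hrε⟩ := ENNReal.lt_iff_exists_nnreal_btwn.1 hε
  obtain ⟨δ, hδ, hXδ⟩ := hX (NNReal.coe_pos.2 (ENNReal.coe_pos.1 hr))
  filter_upwards [ENNReal.tendsto_nhds_zero.1 hμA _ (ENNReal.ofReal_pos.2 hδ)] with i hi
  calc ‖∫ ω in A i, X i ω ∂μ‖ₑ
      ≤ ∫⁻ ω in A i, ‖X i ω‖ₑ ∂μ := enorm_integral_le_lintegral_enorm _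
    _ = eLpNorm ((A i).indicator (X i)) 1 μ := by
        rw [eLpNorm_indicator_eq_eLpNorm_restrict (hA i), eLpNorm_one_eq_lintegral_enorm]
    _ ≤ ENNReal.ofReal r := hXδ i _ (hA i) hi
    _ ≤ ε := ENNReal.ofReal_coe_nnreal.trans_le hrε.le

section JumpFiltration

variable {γ : Ω → ℝ≥0∞}

lemma measurableSet_jumpSet (hγ : Measurable γ) (t : ℝ≥0) : MeasurableSet (jumpSet γ t) :=
  measurableSet_lt measurable_const hγ

lemma jumpσ_le (t : ℝ≥0) : jumpσ m γ t ≤ m :=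
  MeasurableSpace.generateFrom_le fun _ hA => hA.1

lemma jumpσ_mono : Monotone (jumpσ m γ) := fun s t hst => by
  have hsub : jumpSet γ t ⊆ jumpSet γ s := fun ω hω => (ENNReal.coe_le_coe.2 hst).trans_lt hω
  refine MeasurableSpace.generateFrom_mono fun A hA => ⟨hA.1, hA.2.imp (fun h => ?_) fun h => ?_⟩
  · exact subset_empty_iff.1 (h ▸ inter_subset_inter_right A hsub)
  · exact inter_eq_right.2 (hsub.trans (inter_eq_right.1 h))

lemma measurableSet_jumpσ_iff {t : ℝ≥0} {A : Set Ω} :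
    MeasurableSet[jumpσ m γ t] A ↔ A ∈ jumpColl m γ t := by
  refine ⟨fun hA => ?_, fun hA => MeasurableSpace.measurableSet_generateFrom hA⟩
  induction A, hA using MeasurableSpace.generateFrom_induction with
  | hC _ hA _ => exact hA
  | empty => exact ⟨.empty, .inl (empty_inter _)⟩
  | compl A _ hA =>
    refine ⟨hA.1.compl, hA.2.symm.imp (fun h => ?_) fun h => ?_⟩
    · exact (disjoint_compl_left.mono_right (inter_eq_right.1 h)).inter_eq
    · exact inter_eq_right.2 (disjoint_iff_inter_eq_empty.2 h).subset_compl_left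
  | iUnion A _ hA =>
    refine ⟨.iUnion fun n => (hA n).1, ?_⟩
    by_cases hcover : ∃ n, A n ∩ jumpSet γ t = jumpSet γ t
    · obtain ⟨n, hn⟩ := hcover
      exact .inr (inter_eq_right.2 ((inter_eq_right.1 hn).trans (subset_iUnion A n)))
    · refine .inl ?_
      rw [iUnion_inter, iUnion_eq_empty]
      exact fun n => (hA n).2.resolve_right fun h => hcover ⟨n, h⟩

lemma ae_eq_condExp_jumpσ {μ : Measure Ω} [IsFiniteMeasure μ] (hγ : Measurable γ) {t : ℝ≥0}
    {X L : Ω → ℝ} (hXmeas : Measurable[jumpσ m γ t] X) (hX : Integrable X μ) (hL : Integrable L μ)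
    (hXL : ∀ᵐ ω ∂μ, ω ∉ jumpSet γ t → X ω = L ω)
    (hint : ∫ ω in jumpSet γ t, X ω ∂μ = ∫ ω in jumpSet γ t, L ω ∂μ) :
    X =ᵐ[μ] μ[L | jumpσ m γ t] := by
  refine ae_eq_condExp_of_forall_setIntegral_eq (jumpσ_le t) hL (fun _ _ _ => hX.integrableOn) ?_
    hXmeas.stronglyMeasurable.aestronglyMeasurable
  intro A hA _
  obtain ⟨hAmeas, hAjump⟩ := measurableSet_jumpσ_iff.1 hA
  have eq_inter : ∫ ω in A ∩ jumpSet γ t, X ω ∂μ = ∫ ω in A ∩ jumpSet γ t, L ω ∂μ := by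
    rcases hAjump with h | h <;> simp only [h, setIntegral_empty, hint]
  have eq_sdiff : ∫ ω in A \ jumpSet γ t, X ω ∂μ = ∫ ω in A \ jumpSet γ t, L ω ∂μ :=
    setIntegral_congr_ae (hAmeas.diff (measurableSet_jumpSet hγ t))
      (hXL.mono fun ω h hω => h hω.2)
  rw [← integral_inter_add_sdiff (measurableSet_jumpSet hγ t) hX.integrableOn,
    ← integral_inter_add_sdiff (measurableSet_jumpSet hγ t) hL.integrableOn, eq_inter, eq_sdiff]

lemma uiMartingale_of_forall_ae_eq_condExp {μ : Measure Ω} [IsFiniteMeasure μ]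
    {M : ℝ≥0 → Ω → ℝ} {L : Ω → ℝ} (hM : ∀ t, Measurable[jumpσ m γ t] (M t)) (hL : Integrable L μ)
    (hML : ∀ t, M t =ᵐ[μ] μ[L | jumpσ m γ t]) : UIMartingale μ γ M := by
  refine ⟨⟨fun t _ => hM t, fun t _ => integrable_condExp.congr (hML t).symm,
    fun s _ t _ hst => ?_⟩, (hL.uniformIntegrable_condExp jumpσ_le).ae_eq fun t => (hML t).symm⟩
  calc μ[M t | jumpσ m γ s]
      =ᵐ[μ] μ[μ[L | jumpσ m γ t] | jumpσ m γ s] := condExp_congr_ae (hML t)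
    _ =ᵐ[μ] μ[L | jumpσ m γ s] := condExp_condExp_of_le (jumpσ_mono hst) (jumpσ_le t)
    _ =ᵐ[μ] M s := (hML s).symm

end JumpFiltration

section JumpTime

variable {μ : Measure Ω} {γ : Ω → ℝ≥0∞}

lemma Gbar_toNNReal (hγ : Measurable γ) {x : ℝ≥0∞} (hx : x ≠ ⊤) :
    Gbar μ γ x.toNNReal = (μ.map γ).real (Ioi x) := by
  rw [map_measureReal_apply hγ measurableSet_Ioi, Gbar, ENNReal.coe_toNNReal hx]
  rfl

lemma measurable_Gbar [IsFiniteMeasure μ] : Measurable (Gbar μ γ) :=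
  Antitone.measurable fun _ _ hst => measureReal_mono fun _ hω =>
    (ENNReal.coe_le_coe.2 hst).trans_lt hω

lemma tG_pos [NeZero μ] (hlt : ∀ᵐ ω ∂μ, γ ω < tG μ γ) : 0 < tG μ γ :=
  let ⟨_, hω⟩ := hlt.exists
  bot_lt_of_lt hω

lemma restrict_map_Iio_tG (hγ : Measurable γ) (hlt : ∀ᵐ ω ∂μ, γ ω < tG μ γ) :
    (μ.map γ).restrict (Iio (tG μ γ)) = μ.map γ :=
  Measure.restrict_eq_self_of_ae_mem ((ae_map_iff hγ.aemeasurable measurableSet_Iio).2 hlt)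

lemma tendsto_measure_jumpSet [IsFiniteMeasure μ] (hγ : Measurable γ)
    (hlt : ∀ᵐ ω ∂μ, γ ω < tG μ γ) :
    Tendsto (fun t => μ (jumpSet γ t)) (leftF (tG μ γ)) (𝓝 0) := by
  rw [← measure_empty (μ := μ)]
  refine tendsto_measure_of_ae_tendsto_indicator_of_isFiniteMeasure _ .empty
    (measurableSet_jumpSet hγ) ?_
  filter_upwards [hlt] with ω hω
  filter_upwards [eventually_lt_coe_leftF hω] with t ht
  exact iff_of_false ht.not_gt (notMem_empty ω)

variable [IsProbabilityMeasure μ]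

lemma tG_eq_essSup (hγ : Measurable γ) : tG μ γ = essSup γ μ := by
  have prob_lt_one_iff (t : ℝ≥0) : μ {ω | γ ω ≤ t} < 1 ↔ ¬ γ ≤ᵐ[μ] fun _ => (t : ℝ≥0∞) := by
    rw [prob_le_one.lt_iff_ne]
    exact not_congr (mem_ae_iff_prob_eq_one (measurableSet_le hγ measurable_const)).symm
  refine le_antisymm (sSup_le ?_) (le_of_forall_lt fun x hx => ?_)
  · rintro _ ⟨t, ht, rfl⟩
    by_contra! hlt
    exact (prob_lt_one_iff t).1 ht ((ae_lt_of_essSup_lt hlt).mono fun _ => le_of_lt)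
  · obtain ⟨t, hxt, ht⟩ := ENNReal.lt_iff_exists_nnreal_btwn.1 hx
    refine hxt.trans_le (le_sSup ⟨t, (prob_lt_one_iff t).2 fun hle => ?_, rfl⟩)
    exact ht.not_ge (essSup_le_of_ae_le _ hle)

lemma ae_lt_tG (hγ : Measurable γ) (hA : CaseA μ γ) (hfin : μ {ω | γ ω = ⊤} = 0) :
    ∀ᵐ ω ∂μ, γ ω < tG μ γ := by
  have ne_top : ∀ᵐ ω ∂μ, γ ω ≠ ⊤ := by simpa [ae_iff] using hfin
  have ne_tG : ∀ᵐ ω ∂μ, ¬ (γ ω = tG μ γ ∧ tG μ γ < ⊤) := by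
    simpa only [ae_iff, not_not] using! hA
  filter_upwards [ENNReal.ae_le_essSup γ, ne_top, ne_tG] with ω hle hωtop hωtG
  rw [← tG_eq_essSup hγ] at hle
  refine hle.lt_of_ne fun heq => hωtG ⟨heq, heq ▸ lt_top_iff_ne_top.2 hωtop⟩

lemma mem_TT_of_lt_tG (hγ : Measurable γ) {t : ℝ≥0} (ht : t < tG μ γ) : t ∈ TT μ γ := by
  by_contra hmem
  have ae_lt : ∀ᵐ ω ∂μ, ¬ (t : ℝ≥0∞) ≤ γ ω := by
    simpa only [ae_iff, not_not] using nonpos_iff_eq_zero.1 (not_lt.1 hmem)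
  rw [tG_eq_essSup hγ] at ht
  exact ht.not_ge (essSup_le_of_ae_le _ (ae_lt.mono fun ω hω => (not_le.1 hω).le))

lemma MemL1loc.integrableOn_Icc (hγ : Measurable γ) {z : ℝ≥0 → ℝ} (hz : MemL1loc μ γ z)
    {x : ℝ≥0∞} (hx : x < tG μ γ) :
    IntegrableOn (fun x : ℝ≥0∞ => z x.toNNReal) (Icc 0 x) (μ.map γ) := by
  lift x to ℝ≥0 using hx.ne_top
  exact hz.2 x (mem_TT_of_lt_tG hγ hx)

end JumpTime

/-- The process `M` is indistinguishable from `F(t) 1_{t < γ} + L 1_{t ≥ γ}`: it follows the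
deterministic path `F` before the jump time `γ` and stays at `L` from then on. -/
def HasSingleJumpForm (μ : Measure Ω) (γ : Ω → ℝ≥0∞) (M : ℝ≥0 → Ω → ℝ) (F : ℝ≥0 → ℝ)
    (L : Ω → ℝ) : Prop :=
  ∀ᵐ ω ∂μ, ∀ t : ℝ≥0, M t ω = if (t : ℝ≥0∞) < γ ω then F t else L ω

section UniformIntegrability

variable {μ : Measure Ω} {γ : Ω → ℝ≥0∞} {M : ℝ≥0 → Ω → ℝ} {F H : ℝ≥0 → ℝ} {L L' : Ω → ℝ}

lemma HasSingleJumpForm.integrable [IsFiniteMeasure μ] (hM : HasSingleJumpForm μ γ M F L)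
    (hγ : Measurable γ) (hL : Integrable L μ) (t : ℝ≥0) : Integrable (M t) μ :=
  (Integrable.piecewise (s := {ω | (t : ℝ≥0∞) < γ ω}) (measurableSet_jumpSet hγ t)
    (integrable_const (F t)).integrableOn hL.integrableOn).congr (hM.mono fun _ hω => (hω t).symm)

lemma HasSingleJumpForm.setIntegral_jumpSet (hM : HasSingleJumpForm μ γ M F L)
    (hγ : Measurable γ) (t : ℝ≥0) : ∫ ω in jumpSet γ t, M t ω ∂μ = F t * Gbar μ γ t :=
  calc ∫ ω in jumpSet γ t, M t ω ∂μ
      = ∫ _ in jumpSet γ t, F t ∂μ := setIntegral_congr_ae (measurableSet_jumpSet hγ t)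
        (hM.mono fun _ hω hlt => (hω t).trans (if_pos hlt))
    _ = F t * Gbar μ γ t := by rw [setIntegral_const, smul_eq_mul, mul_comm]; rfl

lemma setIntegral_jumpSet_add (hγ : Measurable γ) (hL'cond : CondZeroGivenGamma μ γ L')
    (hL' : Integrable L' μ) {h : ℝ≥0∞ → ℝ} (hh : Integrable h (μ.map γ)) (t : ℝ≥0) :
    ∫ ω in jumpSet γ t, (h (γ ω) + L' ω) ∂μ = ∫ x in Ioi (t : ℝ≥0∞), h x ∂(μ.map γ) := by
  have hL'zero : ∫ ω in jumpSet γ t, L' ω ∂μ = 0 :=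
    hL'cond (Ioi (t : ℝ≥0∞)) measurableSet_Ioi hL'.integrableOn
  have hhγ : Integrable (fun ω => h (γ ω)) μ := hh.comp_measurable hγ
  rw [integral_add hhγ.integrableOn hL'.integrableOn, hL'zero, add_zero,
    setIntegral_map measurableSet_Ioi hh.aestronglyMeasurable hγ.aemeasurable]
  rfl

lemma CondM.mul_Gbar_add_setIntegral_Ioc (hFH : CondM μ γ F H)
    (hH : Integrable (fun x : ℝ≥0∞ => H x.toNNReal) (μ.map γ)) {s t : ℝ≥0} (hst : s ≤ t)
    (ht : t < tG μ γ) :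
    F t * Gbar μ γ t + ∫ x in Ioc (s : ℝ≥0∞) t, H x.toNNReal ∂(μ.map γ) = F s * Gbar μ γ s := by
  have hst' : (s : ℝ≥0∞) ≤ t := ENNReal.coe_le_coe.2 hst
  have split : ∫ x in Ioc (0 : ℝ≥0∞) t, H x.toNNReal ∂(μ.map γ) =
      (∫ x in Ioc (0 : ℝ≥0∞) s, H x.toNNReal ∂(μ.map γ)) +
        ∫ x in Ioc (s : ℝ≥0∞) t, H x.toNNReal ∂(μ.map γ) := by
    rw [← setIntegral_union (Ioc_disjoint_Ioc_of_le le_rfl) measurableSet_Ioc hH.integrableOn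
      hH.integrableOn, Ioc_union_Ioc_eq_Ioc zero_le hst']
  linear_combination hFH.2.2.1 t ht - hFH.2.2.1 s (hst'.trans_lt ht) - split

variable [IsProbabilityMeasure μ]

lemma CondM.mul_Gbar_eq_setIntegral_Ioi (hFH : CondM μ γ F H) (hγ : Measurable γ)
    (hlt : ∀ᵐ ω ∂μ, γ ω < tG μ γ) (hH : Integrable (fun x : ℝ≥0∞ => H x.toNNReal) (μ.map γ))
    (hlim : Tendsto (fun t => F t * Gbar μ γ t) (leftF (tG μ γ)) (𝓝 0)) (s : ℝ≥0) :
    F s * Gbar μ γ s = ∫ x in Ioi (s : ℝ≥0∞), H x.toNNReal ∂(μ.map γ) := by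
  have : (leftF (tG μ γ)).NeBot := leftF_neBot (tG_pos hlt)
  have tail_eq : ∫ x in Ioi (s : ℝ≥0∞), H x.toNNReal ∂(μ.map γ) =
      ∫ x in Ioo (s : ℝ≥0∞) (tG μ γ), H x.toNNReal ∂(μ.map γ) := by
    rw [← Ioi_inter_Iio, ← Measure.restrict_restrict measurableSet_Ioi,
      restrict_map_Iio_tG hγ hlt]
  rw [tail_eq]
  rcases lt_or_ge (s : ℝ≥0∞) (tG μ γ) with hs | hs
  · have lim_integral := hlim.add (tendsto_setIntegral_Ioc_leftF
      (a := (s : ℝ≥0∞)) (b := tG μ γ) hH.integrableOn)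
    rw [zero_add] at lim_integral
    refine tendsto_nhds_unique (tendsto_const_nhds.congr' ?_) lim_integral
    filter_upwards [eventually_lt_coe_leftF hs, eventually_coe_lt_leftF _] with t hst ht
    exact (hFH.mul_Gbar_add_setIntegral_Ioc hH (ENNReal.coe_le_coe.1 hst.le) ht).symm
  · have jumpSet_null : μ (jumpSet γ s) = 0 :=
      measure_mono_null (fun ω hω => (hs.trans_lt hω).not_gt) hlt
    rw [Ioo_eq_empty hs.not_gt, setIntegral_empty]
    exact mul_eq_zero_of_right _ ((measureReal_eq_zero_iff (measure_ne_top _ _)).2 jumpSet_null)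

theorem uiMartingale_iff_tendsto (hγ : Measurable γ) (hlt : ∀ᵐ ω ∂μ, γ ω < tG μ γ)
    (hMmeas : ∀ t, Measurable[jumpσ m γ t] (M t))
    (hM : HasSingleJumpForm μ γ M F fun ω => H (γ ω).toNNReal + L' ω) (hFH : CondM μ γ F H)
    (hH : Integrable (fun x : ℝ≥0∞ => H x.toNNReal) (μ.map γ))
    (hL'cond : CondZeroGivenGamma μ γ L') (hL' : Integrable L' μ) :
    UIMartingale μ γ M ↔ Tendsto (fun t => F t * Gbar μ γ t) (leftF (tG μ γ)) (𝓝 0) := by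
  constructor
  · intro hUI
    simp_rw [← hM.setIntegral_jumpSet hγ]
    exact tendsto_setIntegral_of_unifIntegrable hUI.2.unifIntegrable (measurableSet_jumpSet hγ)
      (tendsto_measure_jumpSet hγ hlt)
  · intro hlim
    have hL : Integrable (fun ω => H (γ ω).toNNReal + L' ω) μ := (hH.comp_measurable hγ).add hL'
    refine uiMartingale_of_forall_ae_eq_condExp hMmeas hL fun t => ?_
    refine ae_eq_condExp_jumpσ hγ (hMmeas t) (hM.integrable hγ hL t) hL
      (hM.mono fun ω hω hnot => (hω t).trans (if_neg hnot)) ?_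
    rw [hM.setIntegral_jumpSet hγ, hFH.mul_Gbar_eq_setIntegral_Ioi hγ hlt hH hlim,
      setIntegral_jumpSet_add hγ hL'cond hL' hH]

end UniformIntegrability

/-- The left limit `F(x-)` of a function `F` with `F loc≪ G` and density `z = dF/dG`, as an
explicit integral, which makes it available at every `x ∈ [0, ∞]`. -/
def leftLimit (μ : Measure Ω) (γ : Ω → ℝ≥0∞) (F z : ℝ≥0 → ℝ) (x : ℝ≥0∞) : ℝ :=
  F 0 + ∫ s in Ioo 0 x, z s.toNNReal ∂(μ.map γ)

section Supremum

variable {μ : Measure Ω} {γ : Ω → ℝ≥0∞} {M : ℝ≥0 → Ω → ℝ} {F H z : ℝ≥0 → ℝ} {L : Ω → ℝ}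

lemma LocAC.enorm_le_of_coe_lt (hz : LocAC μ γ F z) {t : ℝ≥0} {u : ℝ≥0∞} (htu : t < u)
    (hu : u < tG μ γ) :
    ‖F t‖ₑ ≤ ‖F 0‖ₑ +
      ∫⁻ x in Iio u, ‖z x.toNNReal‖ₑ ∂((μ.map γ).restrict (Ioo 0 (tG μ γ))) := by
  rw [hz.2 t (htu.trans hu), Measure.restrict_restrict measurableSet_Iio]
  refine (enorm_add_le _ _).trans (add_le_add_right ?_ _)
  refine (enorm_integral_le_lintegral_enorm _).trans (lintegral_mono_set fun x hx => ?_)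
  exact ⟨hx.2.trans_lt htu, hx.1, hx.2.trans_lt (htu.trans hu)⟩

lemma lintegral_setLIntegral_Iio_density [IsFiniteMeasure μ] (hγ : Measurable γ)
    (hz : Measurable z) :
    ∫⁻ ω, ∫⁻ x in Iio (γ ω), ‖z x.toNNReal‖ₑ ∂((μ.map γ).restrict (Ioo 0 (tG μ γ))) ∂μ =
      ∫⁻ x in Ioo 0 (tG μ γ), ‖Gbar μ γ x.toNNReal * z x.toNNReal‖ₑ ∂(μ.map γ) := by
  have inner_meas : Measurable fun u : ℝ≥0∞ =>
      ∫⁻ x in Iio u, ‖z x.toNNReal‖ₑ ∂((μ.map γ).restrict (Ioo 0 (tG μ γ))) :=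
    Monotone.measurable fun _ _ huv => lintegral_mono_set (Iio_subset_Iio huv)
  rw [← lintegral_map inner_meas hγ, lintegral_setLIntegral_Iio (by fun_prop)]
  refine setLIntegral_congr_fun measurableSet_Ioo fun x hx => ?_
  rw [Gbar_toNNReal hγ hx.2.ne_top, enorm_mul, Real.enorm_of_nonneg measureReal_nonneg,
    ofReal_measureReal]

variable [IsProbabilityMeasure μ]

lemma LocAC.tendsto_leftLimit (hz : LocAC μ γ F z) (hγ : Measurable γ) {x : ℝ≥0∞}
    (hx : x < tG μ γ) : Tendsto F (leftF x) (𝓝 (leftLimit μ γ F z x)) := by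
  have hz_Ioo := (hz.1.integrableOn_Icc hγ hx).mono_set Ioo_subset_Icc_self
  refine ((tendsto_setIntegral_Ioc_leftF hz_Ioo).const_add (F 0)).congr' ?_
  filter_upwards [eventually_coe_lt_leftF x] with t ht
  exact (hz.2 t (ht.trans hx)).symm

lemma LocAC.enorm_leftLimit_le_iSup (hz : LocAC μ γ F z) (hγ : Measurable γ) {x : ℝ≥0∞}
    (hx : x ∈ Ioo 0 (tG μ γ)) :
    ‖leftLimit μ γ F z x‖ₑ ≤ ⨆ (t : ℝ≥0) (_ : (t : ℝ≥0∞) < x), ‖F t‖ₑ := by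
  have : (leftF x).NeBot := leftF_neBot hx.1
  refine le_of_tendsto (hz.tendsto_leftLimit hγ hx.2).enorm ?_
  filter_upwards [eventually_coe_lt_leftF x] with t ht
  exact le_iSup₂_of_le t ht le_rfl

lemma CondM.Gbar_mul_density_ae_eq (hFH : CondM μ γ F H) (hz : LocAC μ γ F z)
    (hγ : Measurable γ) :
    ∀ᵐ x ∂(μ.map γ).restrict (Ioo 0 (tG μ γ)),
      Gbar μ γ x.toNNReal * z x.toNNReal = leftLimit μ γ F z x - H x.toNNReal := by
  have : IsProbabilityMeasure (μ.map γ) := Measure.isProbabilityMeasure_map hγ.aemeasurable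
  have density := measureReal_Ioi_mul_ae_eq_of_forall_add_setIntegral_eq (ν := μ.map γ)
    (φ := fun x => z x.toNNReal) (h := fun x => H x.toNNReal) (a := 0) (b := tG μ γ) (c := F 0)
    (fun t ht => (hz.1.integrableOn_Icc hγ ht.2).mono_set Ioc_subset_Icc_self)
    (fun t ht => (hFH.2.1.integrableOn_Icc hγ ht.2).mono_set Ioc_subset_Icc_self) fun t ht => by
      lift t to ℝ≥0 using ht.2.ne_top
      have condM_eq := hFH.2.2.1 t ht.2
      rwa [hz.2 t ht.2, ← ENNReal.toNNReal_coe t, Gbar_toNNReal hγ ENNReal.coe_ne_top,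
        ← ENNReal.toNNReal_zero, Gbar_toNNReal hγ ENNReal.zero_ne_top] at condM_eq
  filter_upwards [density, ae_restrict_mem measurableSet_Ioo] with x hx hx_mem
  rwa [Gbar_toNNReal hγ hx_mem.2.ne_top]

lemma HasSingleJumpForm.setLIntegral_enorm_leftLimit_le (hM : HasSingleJumpForm μ γ M F L)
    (hz : LocAC μ γ F z) (hγ : Measurable γ) :
    ∫⁻ x in Ioo 0 (tG μ γ), ‖leftLimit μ γ F z x‖ₑ ∂(μ.map γ) ≤ ∫⁻ ω, ⨆ t, ‖M t ω‖ₑ ∂μ := by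
  rw [← lintegral_indicator measurableSet_Ioo]
  refine (lintegral_map_le _ _).trans (lintegral_mono_ae ?_)
  filter_upwards [hM] with ω hω
  refine indicator_apply_le' (fun hmem => ?_) fun _ => zero_le
  refine (hz.enorm_leftLimit_le_iSup hγ hmem).trans ?_
  refine iSup₂_le fun t ht => le_iSup_of_le t ?_
  rw [hω t, if_pos ht]

lemma HasSingleJumpForm.integrableOn_Gbar_mul_density (hM : HasSingleJumpForm μ γ M F L)
    (hγ : Measurable γ) (hFH : CondM μ γ F H) (hz : LocAC μ γ F z)
    (hH : Integrable (fun x : ℝ≥0∞ => H x.toNNReal) (μ.map γ))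
    (hsup : ∫⁻ ω, ⨆ t, ‖M t ω‖ₑ ∂μ < ⊤) :
    IntegrableOn (fun x : ℝ≥0∞ => Gbar μ γ x.toNNReal * z x.toNNReal) (Ioo 0 (tG μ γ))
      (μ.map γ) := by
  have hGbar_meas : Measurable (Gbar μ γ) := measurable_Gbar
  have hz_meas : Measurable z := hz.1.1
  refine ⟨by fun_prop, ?_⟩
  calc ∫⁻ x in Ioo 0 (tG μ γ), ‖Gbar μ γ x.toNNReal * z x.toNNReal‖ₑ ∂(μ.map γ)
      ≤ ∫⁻ x in Ioo 0 (tG μ γ), (‖leftLimit μ γ F z x‖ₑ + ‖H x.toNNReal‖ₑ) ∂(μ.map γ) :=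
        lintegral_mono_ae ((hFH.Gbar_mul_density_ae_eq hz hγ).mono fun x hx =>
          hx ▸ enorm_sub_le)
    _ = (∫⁻ x in Ioo 0 (tG μ γ), ‖leftLimit μ γ F z x‖ₑ ∂(μ.map γ)) +
          ∫⁻ x in Ioo 0 (tG μ γ), ‖H x.toNNReal‖ₑ ∂(μ.map γ) :=
        lintegral_add_right' _ hH.integrableOn.aestronglyMeasurable.enorm
    _ < ⊤ := ENNReal.add_lt_top.2
        ⟨(hM.setLIntegral_enorm_leftLimit_le hz hγ).trans_lt hsup, hH.integrableOn.2⟩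

lemma HasSingleJumpForm.lintegral_iSup_enorm_lt_top (hM : HasSingleJumpForm μ γ M F L)
    (hγ : Measurable γ) (hlt : ∀ᵐ ω ∂μ, γ ω < tG μ γ) (hz : LocAC μ γ F z) (hL : Integrable L μ)
    (hint : IntegrableOn (fun x : ℝ≥0∞ => Gbar μ γ x.toNNReal * z x.toNNReal) (Ioo 0 (tG μ γ))
      (μ.map γ)) :
    ∫⁻ ω, ⨆ t, ‖M t ω‖ₑ ∂μ < ⊤ := by
  let Φ (u : ℝ≥0∞) : ℝ≥0∞ :=
    ∫⁻ x in Iio u, ‖z x.toNNReal‖ₑ ∂((μ.map γ).restrict (Ioo 0 (tG μ γ)))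
  have iSup_le_add : ∀ᵐ ω ∂μ, ⨆ t, ‖M t ω‖ₑ ≤ (‖F 0‖ₑ + ‖L ω‖ₑ) + Φ (γ ω) := by
    filter_upwards [hM, hlt] with ω hω hω_lt
    refine iSup_le fun t => ?_
    rw [hω t]
    split_ifs with ht
    · exact (hz.enorm_le_of_coe_lt ht hω_lt).trans (add_le_add_left le_self_add _)
    · exact le_add_self.trans le_self_add
  calc ∫⁻ ω, ⨆ t, ‖M t ω‖ₑ ∂μ
      ≤ ∫⁻ ω, ((‖F 0‖ₑ + ‖L ω‖ₑ) + Φ (γ ω)) ∂μ := lintegral_mono_ae iSup_le_add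
    _ = (‖F 0‖ₑ + ∫⁻ ω, ‖L ω‖ₑ ∂μ) + ∫⁻ ω, Φ (γ ω) ∂μ := by
        rw [lintegral_add_left' (by fun_prop), lintegral_add_left measurable_const,
          lintegral_const, measure_univ, mul_one]
    _ < ⊤ := by
        rw [lintegral_setLIntegral_Iio_density hγ hz.1.1]
        exact ENNReal.add_lt_top.2 ⟨ENNReal.add_lt_top.2 ⟨enorm_lt_top, hL.2⟩, hint.2⟩

theorem HasSingleJumpForm.lintegral_iSup_enorm_lt_top_iff (hM : HasSingleJumpForm μ γ M F L)
    (hγ : Measurable γ) (hlt : ∀ᵐ ω ∂μ, γ ω < tG μ γ) (hFH : CondM μ γ F H)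
    (hz : LocAC μ γ F z) (hH : Integrable (fun x : ℝ≥0∞ => H x.toNNReal) (μ.map γ))
    (hL : Integrable L μ) :
    ∫⁻ ω, ⨆ t, ‖M t ω‖ₑ ∂μ < ⊤ ↔
      IntegrableOn (fun x : ℝ≥0∞ => Gbar μ γ x.toNNReal * z x.toNNReal) (Ioo 0 (tG μ γ))
        (μ.map γ) :=
  ⟨hM.integrableOn_Gbar_mul_density hγ hFH hz hH, hM.lintegral_iSup_enorm_lt_top hγ hlt hz hL⟩

end Supremum

/-- **Theorem 5 (iii.ii), Case A.** Assume `P(γ = ∞) = 0`, `E|L'| < ∞` and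
`∫_{[0,t_G)} |H| dG < ∞`. Then `M` is a uniformly integrable martingale with
`E(sup_t |M_t|) = ∞` iff `lim_{t↑t_G} F(t)Ḡ(t) = 0` and
`∫_{[0,t_G)} Ḡ(s)|dF/dG(s)| dG(s) = ∞`. -/
theorem stmt_15
(μ : Measure Ω) [IsProbabilityMeasure μ] (γ : Ω → ℝ≥0∞)
    (hγ : Measurable γ) (hpos : 0 < μ {ω | 0 < γ ω})
    (M : ℝ≥0 → Ω → ℝ) (F H : ℝ≥0 → ℝ) (L' : Ω → ℝ)
    (hM : LocalMartingale μ γ M)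
    (hFH : CondM μ γ F H)
    (hL'meas : Measurable L')
    (hL'int : ∀ t ∈ TT μ γ,
      Integrable (fun ω => ({ω' | γ ω' ≤ (t : ℝ≥0∞)}.indicator L') ω) μ)
    (hL'cond : CondZeroGivenGamma μ γ L')
    (hrepr : ∀ᵐ ω ∂μ, ∀ t : ℝ≥0,
      M t ω = if (t : ℝ≥0∞) < γ ω then F t else H (γ ω).toNNReal + L' ω)
    (hA : CaseA μ γ)
    (hfin : μ {ω | γ ω = ⊤} = 0)
    (hL'fin : Integrable L' μ)
    (hHfin : IntegrableOn (fun x : ℝ≥0∞ => H x.toNNReal) (Iio (tG μ γ)) (μ.map γ)) :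
    (UIMartingale μ γ M ∧ ∫⁻ ω, ⨆ t : ℝ≥0, (‖M t ω‖₊ : ℝ≥0∞) ∂μ = ⊤) ↔
      (Tendsto (fun t => F t * Gbar μ γ t) (leftF (tG μ γ)) (𝓝 0) ∧
        ∀ z : ℝ≥0 → ℝ, LocAC μ γ F z →
          ¬ IntegrableOn (fun x : ℝ≥0∞ => Gbar μ γ x.toNNReal * z x.toNNReal)
              (Ioo 0 (tG μ γ)) (μ.map γ)) := by
  have hlt : ∀ᵐ ω ∂μ, γ ω < tG μ γ := ae_lt_tG hγ hA hfin
  have hH : Integrable (fun x : ℝ≥0∞ => H x.toNNReal) (μ.map γ) := by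
    rwa [IntegrableOn, restrict_map_Iio_tG hγ hlt] at hHfin
  have hL : Integrable (fun ω => H (γ ω).toNNReal + L' ω) μ :=
    (hH.comp_measurable hγ).add hL'fin
  have hform : HasSingleJumpForm μ γ M F fun ω => H (γ ω).toNNReal + L' ω := hrepr
  refine and_congr (uiMartingale_iff_tendsto hγ hlt hM.1 hform hFH hH hL'cond hL'fin) ?_
  have sup_lt_top_iff {z : ℝ≥0 → ℝ} (hz : LocAC μ γ F z) :=
    hform.lintegral_iSup_enorm_lt_top_iff hγ hlt hFH hz hH hL
  obtain ⟨z₀, hz₀⟩ := hFH.1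
  constructor
  · exact fun hsup z hz hint => ((sup_lt_top_iff hz).2 hint).ne hsup
  · exact fun hnot => not_lt_top_iff.1 fun hsup => hnot z₀ hz₀ ((sup_lt_top_iff hz₀).1 hsup)

end WithMeasurableSpace

end SingleJump
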